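/- Let G be a finite connected bridgeless simple graph with vertex set V and edge set E, and let F ⊆ E. Then |F| − |V| + k(F) = |E| − |V| (where k(F) is the number of connected components of the spanning subgraph (V,F)) if and only if either F = E − {e} for some edge e ∈ E, or F = E − S for some pairwise-disconnecting set S of G. -/

import Mathlib

/-!
Put `S = E \ F`. Since `|F| = |E| - |S|`, the equation says that `G - S` has exactly `|S|`
components. Deleting an edge adds at most one component, and adds one exactly when the edge is a
bridge; as a bridge stays a bridge when other edges are deleted, `G - S` has `|S|` more components
than `G` if and only if every edge of `S` is a bridge of `G`. For `e ∈ S` the graph `G - e` is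
connected, so applying this to `G - e` and `S - {e}` shows that `G - S` has `|S|` components if and
only if every `f ∈ S - {e}` is a bridge of `G - e`, that is, `G - {e, f}` is disconnected. The first
alternative of the theorem is the case `S = {e}`, where there is no such `f`.
-/

open LaurentPolynomial Finset

/-- `kComp V F` is the number of connected components of the spanning subgraph `(V, F)`. -/
noncomputable def kComp (V : Type*) [Fintype V] (F : Finset (Sym2 V)) : ℕ :=
  Nat.card (SimpleGraph.fromEdgeSet (↑F : Set (Sym2 V))).ConnectedComponent

/-- `S` is a pairwise-disconnecting set of `G`: a set of at least two edges of `G` such that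
deleting any two distinct edges of `S` disconnects the graph. -/
def IsPDSet {V : Type*} (G : SimpleGraph V) (S : Finset (Sym2 V)) : Prop :=
  ↑S ⊆ G.edgeSet ∧ 2 ≤ S.card ∧
    ∀ e ∈ S, ∀ f ∈ S, e ≠ f → ¬ (G.deleteEdges {e, f}).Connected

/-- A pairwise-disconnecting set is maximal if no pairwise-disconnecting set contains it
as a proper subset. -/
def IsMaxPDSet {V : Type*} (G : SimpleGraph V) (S : Finset (Sym2 V)) : Prop :=
  IsPDSet G S ∧ ∀ S' : Finset (Sym2 V), IsPDSet G S' → S ⊆ S' → S' = S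

section DeleteEdges

open SimpleGraph

variable {V : Type*} {G : SimpleGraph V} {e : Sym2 V} {u v x y : V}

theorem reachable_deleteEdges_or_exists_reachable_endpoint (s : Set (Sym2 V))
    (h : G.Reachable x y) :
    (G.deleteEdges s).Reachable x y ∨ ∃ e ∈ s, ∃ a ∈ e, (G.deleteEdges s).Reachable x a := by
  obtain ⟨p⟩ := h
  induction p with
  | nil => exact .inl .rfl
  | @cons x z _ hxz _ ih =>
    by_cases hs : s(x, z) ∈ s
    · exact .inr ⟨_, hs, x, Sym2.mem_mk_left x z, .rfl⟩
    · have hxz' : (G.deleteEdges s).Reachable x z := (deleteEdges_adj.2 ⟨hxz, hs⟩).reachable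
      exact ih.imp hxz'.trans fun ⟨e, he, a, ha, hza⟩ ↦ ⟨e, he, a, ha, hxz'.trans hza⟩

theorem reachable_deleteEdges_singleton_or (h : G.Reachable x y) :
    (G.deleteEdges {s(u, v)}).Reachable x y ∨
      ((G.deleteEdges {s(u, v)}).Reachable x u ∨ (G.deleteEdges {s(u, v)}).Reachable x v) ∧
      ((G.deleteEdges {s(u, v)}).Reachable y u ∨ (G.deleteEdges {s(u, v)}).Reachable y v) := by
  have hx := reachable_deleteEdges_or_exists_reachable_endpoint {s(u, v)} h
  have hy := reachable_deleteEdges_or_exists_reachable_endpoint {s(u, v)} h.symm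
  simp only [Set.mem_singleton_iff, exists_eq_left, Sym2.mem_iff, exists_eq_or_imp] at hx hy
  rw [reachable_comm] at hy
  exact or_and_left.2 ⟨hx, hy⟩

theorem reachable_deleteEdges_of_not_isBridge (he : ¬ G.IsBridge e) (h : G.Reachable x y) :
    (G.deleteEdges {e}).Reachable x y := by
  induction e with | h u v
  have huv : (G.deleteEdges {s(u, v)}).Reachable u v := not_not.1 he
  rcases reachable_deleteEdges_singleton_or h with hxy | ⟨hx, hy⟩
  · exact hxy
  · have hxv := hx.elim (·.trans huv) id
    have hyv := hy.elim (·.trans huv) id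
    exact hxv.trans hyv.symm

theorem card_connectedComponent_deleteEdges_of_not_isBridge (he : ¬ G.IsBridge e) :
    Nat.card (G.deleteEdges {e}).ConnectedComponent = Nat.card G.ConnectedComponent := by
  refine Nat.card_congr (.ofBijective _
    ⟨?_, ConnectedComponent.surjective_map_ofLE (G.deleteEdges_le {e})⟩)
  refine ConnectedComponent.ind₂ fun x y hxy ↦ ?_
  exact ConnectedComponent.sound
    (reachable_deleteEdges_of_not_isBridge he (ConnectedComponent.exact hxy))

open scoped Classical in
/-- The map induced by `G.deleteEdges {e} ≤ G` on connected components, except that the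
component of `a` is sent to `none`. For an endpoint `a` of `e` it is injective, which bounds the
number of components that deleting `e` can create. -/
noncomputable def componentMapAvoiding (G : SimpleGraph V) (e : Sym2 V) (a : V)
    (c : (G.deleteEdges {e}).ConnectedComponent) : Option G.ConnectedComponent :=
  if c = (G.deleteEdges {e}).connectedComponentMk a then none
  else some (c.map (.ofLE (G.deleteEdges_le {e})))

theorem componentMapAvoiding_injective (hu : u ∈ e) :
    (componentMapAvoiding G e u).Injective := by
  obtain ⟨v, rfl⟩ := hu
  refine ConnectedComponent.ind₂ fun x y hxy ↦ ?_
  unfold componentMapAvoiding at hxy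
  split_ifs at hxy with hxu hyu hyu
  · rw [hxu, hyu]
  have h : G.Reachable x y := ConnectedComponent.exact (Option.some.inj hxy)
  rw [ConnectedComponent.eq] at hxu hyu ⊢
  rcases reachable_deleteEdges_singleton_or h with hxy | ⟨hx, hy⟩
  · exact hxy
  · exact (hx.resolve_left hxu).trans (hy.resolve_left hyu).symm

theorem componentMapAvoiding_surjective (huv : G.Adj u v) (he : G.IsBridge s(u, v)) :
    (componentMapAvoiding G s(u, v) u).Surjective := by
  rintro (_ | c)
  · exact ⟨connectedComponentMk _ u, if_pos rfl⟩
  induction c using ConnectedComponent.ind with | h x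
  by_cases hxu : (G.deleteEdges {s(u, v)}).Reachable x u
  · have hvu : connectedComponentMk _ v ≠ connectedComponentMk _ u :=
      fun h ↦ he (ConnectedComponent.exact h).symm
    have hvx : G.Reachable v x := huv.symm.reachable.trans (hxu.mono (G.deleteEdges_le _)).symm
    exact ⟨connectedComponentMk _ v,
      (if_neg hvu).trans (congrArg some (ConnectedComponent.sound hvx))⟩
  · exact ⟨connectedComponentMk _ x, if_neg (mt ConnectedComponent.exact hxu)⟩

instance finite_connectedComponent_deleteEdges_singleton [Finite G.ConnectedComponent] :
    Finite (G.deleteEdges {e}).ConnectedComponent :=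
  .of_injective _ (componentMapAvoiding_injective e.out_fst_mem)

theorem card_connectedComponent_deleteEdges_singleton_le [Finite G.ConnectedComponent]
    (e : Sym2 V) :
    Nat.card (G.deleteEdges {e}).ConnectedComponent ≤ Nat.card G.ConnectedComponent + 1 := by
  rw [← Finite.card_option]
  exact Nat.card_le_card_of_injective _ (componentMapAvoiding_injective e.out_fst_mem)

theorem card_connectedComponent_deleteEdges_of_isBridge [Finite G.ConnectedComponent]
    (he : G.IsBridge e) (heG : e ∈ G.edgeSet) :
    Nat.card (G.deleteEdges {e}).ConnectedComponent = Nat.card G.ConnectedComponent + 1 := by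
  induction e with | h u v
  rw [← Finite.card_option]
  exact Nat.card_congr (.ofBijective _ ⟨componentMapAvoiding_injective (Sym2.mem_mk_left u v),
    componentMapAvoiding_surjective heG he⟩)

theorem deleteEdges_insert (G : SimpleGraph V) (e : Sym2 V) (s : Set (Sym2 V)) :
    G.deleteEdges (insert e s) = (G.deleteEdges {e}).deleteEdges s := by
  rw [deleteEdges_deleteEdges, Set.singleton_union]

theorem card_connectedComponent_deleteEdges_le [Finite G.ConnectedComponent]
    (S : Finset (Sym2 V)) :
    Nat.card (G.deleteEdges S).ConnectedComponent ≤ Nat.card G.ConnectedComponent + #S := by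
  classical
  induction S using Finset.induction_on generalizing G with
  | empty => simp
  | insert e S he ih =>
    rw [coe_insert, deleteEdges_insert, card_insert_of_notMem he]
    have := card_connectedComponent_deleteEdges_singleton_le (G := G) e
    have := ih (G := G.deleteEdges {e})
    omega

theorem card_connectedComponent_deleteEdges_of_forall_isBridge [Finite G.ConnectedComponent]
    {S : Finset (Sym2 V)} (hSG : ↑S ⊆ G.edgeSet) (hS : ∀ e ∈ S, G.IsBridge e) :
    Nat.card (G.deleteEdges S).ConnectedComponent = Nat.card G.ConnectedComponent + #S := by
  classical
  induction S using Finset.induction_on generalizing G with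
  | empty => simp
  | insert e S he ih =>
    rw [coe_insert, Set.insert_subset_iff] at hSG
    rw [forall_mem_insert] at hS
    have hSG' : ↑S ⊆ (G.deleteEdges {e}).edgeSet := by
      rw [edgeSet_deleteEdges]
      exact Set.subset_sdiff_singleton hSG.2 he
    rw [coe_insert, deleteEdges_insert, card_insert_of_notMem he,
      ih hSG' fun f hf ↦ (hS.2 f hf).anti (G.deleteEdges_le _),
      card_connectedComponent_deleteEdges_of_isBridge hS.1 hSG.1]
    omega

theorem card_connectedComponent_deleteEdges_eq_add_card_iff [Finite G.ConnectedComponent]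
    {S : Finset (Sym2 V)} (hSG : ↑S ⊆ G.edgeSet) :
    Nat.card (G.deleteEdges S).ConnectedComponent = Nat.card G.ConnectedComponent + #S ↔
      ∀ e ∈ S, G.IsBridge e := by
  refine ⟨fun h e he ↦ ?_, card_connectedComponent_deleteEdges_of_forall_isBridge hSG⟩
  classical
  by_contra hb
  have hle := card_connectedComponent_deleteEdges_le (G := G.deleteEdges {e}) (S.erase e)
  rw [← deleteEdges_insert, ← coe_insert, insert_erase he,
    card_connectedComponent_deleteEdges_of_not_isBridge hb] at hle
  have := card_erase_add_one he
  omega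

end DeleteEdges

section Connected

open SimpleGraph

variable {V : Type*} {G : SimpleGraph V} {e : Sym2 V} {S : Finset (Sym2 V)}

theorem card_connectedComponent_eq_one (hG : G.Connected) :
    Nat.card G.ConnectedComponent = 1 :=
  have := hG.nonempty
  Nat.card_eq_one_iff_unique.2 ⟨hG.preconnected.subsingleton_connectedComponent, inferInstance⟩

theorem connected_deleteEdges_singleton_iff_not_isBridge (hG : G.Connected) :
    (G.deleteEdges {e}).Connected ↔ ¬ G.IsBridge e := by
  induction e with | h u v
  exact ⟨fun h hb ↦ hb (h.preconnected u v), hG.connected_delete_edge_of_not_isBridge⟩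

theorem card_connectedComponent_deleteEdges_eq_card_iff_of_mem (hG : G.Connected)
    (hSG : ↑S ⊆ G.edgeSet) (heS : e ∈ S) (he : ¬ G.IsBridge e) :
    Nat.card (G.deleteEdges S).ConnectedComponent = #S ↔
      ∀ f ∈ S, e ≠ f → ¬ (G.deleteEdges {e, f}).Connected := by
  classical
  have hGe := (connected_deleteEdges_singleton_iff_not_isBridge hG).2 he
  have hcard := card_connectedComponent_eq_one hGe
  have : Finite (G.deleteEdges {e}).ConnectedComponent :=
    Nat.finite_of_card_ne_zero (hcard.trans_ne one_ne_zero)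
  have hSGe : ↑(S.erase e) ⊆ (G.deleteEdges {e}).edgeSet := by
    rw [edgeSet_deleteEdges, coe_erase]
    exact Set.sdiff_subset_sdiff_left hSG
  have hiff := card_connectedComponent_deleteEdges_eq_add_card_iff hSGe
  rw [← deleteEdges_insert, ← coe_insert, insert_erase heS, hcard, add_comm,
    card_erase_add_one heS] at hiff
  simp only [hiff, mem_erase, deleteEdges_insert G e,
    connected_deleteEdges_singleton_iff_not_isBridge hGe, not_not, and_imp, ne_comm (a := e)]
  exact forall_congr' fun f ↦ forall_comm

theorem card_connectedComponent_deleteEdges_eq_card_iff_pairwise (hG : G.Connected)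
    (hSG : ↑S ⊆ G.edgeSet) (hS : S.Nonempty) (hbl : ∀ e ∈ S, ¬ G.IsBridge e) :
    Nat.card (G.deleteEdges S).ConnectedComponent = #S ↔
      ∀ e ∈ S, ∀ f ∈ S, e ≠ f → ¬ (G.deleteEdges {e, f}).Connected := by
  have hiff (e) (he : e ∈ S) :=
    card_connectedComponent_deleteEdges_eq_card_iff_of_mem hG hSG he (hbl e he)
  obtain ⟨e, he⟩ := hS
  exact ⟨fun h e he ↦ (hiff e he).1 h, fun h ↦ (hiff e he).2 (h e he)⟩

theorem card_connectedComponent_deleteEdges_eq_card_iff_isPDSet (hG : G.Connected)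
    (hSG : ↑S ⊆ G.edgeSet) (hbl : ∀ e ∈ S, ¬ G.IsBridge e) :
    Nat.card (G.deleteEdges S).ConnectedComponent = #S ↔ (∃ e, S = {e}) ∨ IsPDSet G S := by
  rcases S.eq_empty_or_nonempty with rfl | hS
  · simp [IsPDSet, card_connectedComponent_eq_one hG, eq_comm (a := ∅)]
  rw [card_connectedComponent_deleteEdges_eq_card_iff_pairwise hG hSG hS hbl]
  rcases hS.exists_eq_singleton_or_nontrivial with ⟨e, rfl⟩ | hS2
  · simp
  · have hcard : 2 ≤ #S := one_lt_card_iff_nontrivial.2 hS2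
    have hne : ¬ ∃ e, S = {e} := fun ⟨e, h⟩ ↦ hS2.ne_singleton h
    simp only [IsPDSet, hSG, hcard, hne, true_and, false_or]

theorem kComp_edgeFinset_sdiff [Fintype V] [DecidableEq V] [DecidableRel G.Adj]
    (S : Finset (Sym2 V)) :
    kComp V (G.edgeFinset \ S) = Nat.card (G.deleteEdges S).ConnectedComponent := by
  rw [kComp, coe_sdiff, coe_edgeFinset, ← edgeSet_deleteEdges, fromEdgeSet_edgeSet]

theorem isPDSet_iff_exists_sdiff_eq [Fintype V] [DecidableEq V] [DecidableRel G.Adj]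
    (hS : S ⊆ G.edgeFinset) :
    IsPDSet G S ↔ ∃ T, IsPDSet G T ∧ G.edgeFinset \ S = G.edgeFinset \ T := by
  refine ⟨fun h ↦ ⟨S, h, rfl⟩, ?_⟩
  rintro ⟨T, hT, h⟩
  have hTG : T ⊆ G.edgeFinset := fun e he ↦ mem_edgeFinset.2 (hT.1 he)
  rwa [(sdiff_right_inj hS hTG).1 h]

end Connected

theorem exists_eq_singleton_iff_exists_sdiff_eq_erase {α : Type*} [DecidableEq α]
    {A S : Finset α} (hS : S ⊆ A) : (∃ a, S = {a}) ↔ ∃ a ∈ A, A \ S = A.erase a := by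
  refine exists_congr fun a ↦ ⟨?_, fun ⟨ha, h⟩ ↦ ?_⟩
  · rintro rfl
    exact ⟨singleton_subset_iff.1 hS, sdiff_singleton_eq_erase a A⟩
  · rw [← sdiff_singleton_eq_erase] at h
    exact (sdiff_right_inj hS (singleton_subset_iff.2 ha)).1 h

/-- For a finite connected bridgeless simple graph `G` and `F ⊆ E`, the nullity of `(V, F)`
equals `|E| - |V|` iff `F = E - {e}` for some edge `e`, or `F = E - S` for some
pairwise-disconnecting set `S` of `G`. -/
theorem nullity_eq_iff {V : Type*} [Fintype V] [DecidableEq V]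
    (G : SimpleGraph V) [DecidableRel G.Adj]
    (hconn : G.Connected) (hbl : ∀ e : Sym2 V, ¬ G.IsBridge e)
    (F : Finset (Sym2 V)) (hF : F ⊆ G.edgeFinset) :
    (F.card : ℤ) - (Fintype.card V : ℤ) + (kComp V F : ℤ) =
        (G.edgeFinset.card : ℤ) - (Fintype.card V : ℤ) ↔
      (∃ e ∈ G.edgeFinset, F = G.edgeFinset.erase e) ∨
        (∃ S : Finset (Sym2 V), IsPDSet G S ∧ F = G.edgeFinset \ S) := by
  obtain ⟨S, hS, rfl⟩ : ∃ S ⊆ G.edgeFinset, F = G.edgeFinset \ S :=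
    ⟨_, sdiff_subset, (Finset.sdiff_sdiff_eq_self hF).symm⟩
  have hSG : ↑S ⊆ G.edgeSet := fun e he ↦ SimpleGraph.mem_edgeFinset.1 (hS he)
  have hcount := card_connectedComponent_deleteEdges_eq_card_iff_isPDSet hconn hSG fun e _ ↦ hbl e
  have hcard := card_sdiff_add_card_eq_card hS
  rw [← exists_eq_singleton_iff_exists_sdiff_eq_erase hS, ← isPDSet_iff_exists_sdiff_eq hS,
    ← hcount, ← kComp_edgeFinset_sdiff]
  omega
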